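/- Let (G,P) be a quasi-lattice ordered group and (E,φ) a finitely aligned product system of graphs over P. For every finite subset F of E¹: (1) F ⊆ ∨F; (2) ∨F is the disjoint union, over v ∈ s(F), of the sets ∨{λ ∈ F : s(λ) = v}; (3) ∨F is finite; (4) if G ⊆ ∨F then MCE(G) ⊆ ∨F. -/

import Mathlib

open scoped Classical

noncomputable section

namespace PSG

variable {G : Type*} [Group G] {Λ : Type*}

/-- `g ≤ h` in the left-invariant partial order induced by the submonoid `P`. -/
def qle (P : Submonoid G) (g h : G) : Prop := g⁻¹ * h ∈ P

/-- `r` is a common upper bound of `p` and `q` in `P`. -/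
def IsUB (P : Submonoid G) (p q r : G) : Prop := r ∈ P ∧ qle P p r ∧ qle P q r

/-- `r` is the least common upper bound of `p` and `q` in `P`. -/
def IsLUB2 (P : Submonoid G) (p q r : G) : Prop :=
  IsUB P p q r ∧ ∀ r', IsUB P p q r' → qle P r r'

/-- `r` is the least upper bound in `P` of the set of degrees `D`. -/
def IsLUBFam (P : Submonoid G) (D : Set G) (r : G) : Prop :=
  r ∈ P ∧ (∀ p ∈ D, qle P p r) ∧ ∀ r' ∈ P, (∀ p ∈ D, qle P p r') → qle P r r'

/-- `(G, P)` is quasi-lattice ordered: `P ∩ P⁻¹ = {1}` and every pair of elements of `P`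
with a common upper bound in `P` has a least upper bound in `P`. -/
def QuasiLatticeOrdered (P : Submonoid G) : Prop :=
  (∀ g ∈ P, g⁻¹ ∈ P → g = 1) ∧
    ∀ p ∈ P, ∀ q ∈ P, (∃ r, IsUB P p q r) → ∃ r, IsLUB2 P p q r

/-- A product system of graphs over `P`, encoded on a single edge set `Λ` (which contains the
vertices as the elements of degree `1`), with degree map `d`, source and range maps `src`, `rng`
(valued in vertices), and partial multiplication `mul` (meaningful when `rng a = src b`). -/
structure IsProductSystem (P : Submonoid G) (d : Λ → G) (src rng : Λ → Λ)
    (mul : Λ → Λ → Λ) : Prop where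
  countable : Countable Λ
  d_mem : ∀ a, d a ∈ P
  d_src : ∀ a, d (src a) = 1
  d_rng : ∀ a, d (rng a) = 1
  src_vertex : ∀ v, d v = 1 → src v = v
  rng_vertex : ∀ v, d v = 1 → rng v = v
  d_mul : ∀ a b, rng a = src b → d (mul a b) = d a * d b
  src_mul : ∀ a b, rng a = src b → src (mul a b) = src a
  rng_mul : ∀ a b, rng a = src b → rng (mul a b) = rng b
  mul_assoc' : ∀ a b c, rng a = src b → rng b = src c →
    mul (mul a b) c = mul a (mul b c)
  src_mul_self : ∀ a, mul (src a) a = a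
  mul_rng_self : ∀ a, mul a (rng a) = a
  factor : ∀ p q : G, p ∈ P → q ∈ P → ∀ c, d c = p * q →
    ∃! ab : Λ × Λ, d ab.1 = p ∧ d ab.2 = q ∧ rng ab.1 = src ab.2 ∧ mul ab.1 ab.2 = c

/-- `a` is an initial segment of `c`: `c = a • b` for some (necessarily unique) `b`. -/
def IsInit (src rng : Λ → Λ) (mul : Λ → Λ → Λ) (a c : Λ) : Prop :=
  ∃ b, rng a = src b ∧ mul a b = c

/-- The set of minimal common extensions of `μ` and `ν`. -/
def MCE (P : Submonoid G) (d : Λ → G) (src rng : Λ → Λ) (mul : Λ → Λ → Λ)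
    (μ ν : Λ) : Set Λ :=
  {γ | IsInit src rng mul μ γ ∧ IsInit src rng mul ν γ ∧ IsLUB2 P (d μ) (d ν) (d γ)}

/-- The product system is finitely aligned. -/
def FinitelyAligned (P : Submonoid G) (d : Λ → G) (src rng : Λ → Λ)
    (mul : Λ → Λ → Λ) : Prop :=
  ∀ μ ν : Λ, (MCE P d src rng mul μ ν).Finite

/-- The set of minimal common extensions of a set `S` of edges. -/
def MCEset (P : Submonoid G) (d : Λ → G) (src rng : Λ → Λ) (mul : Λ → Λ → Λ)
    (S : Set Λ) : Set Λ :=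
  {γ | (∀ α ∈ S, IsInit src rng mul α γ) ∧ IsLUBFam P (d '' S) (d γ)}

/-- `∨F`: the union of `MCE(S)` over the nonempty subsets `S ⊆ F`. -/
def vee (P : Submonoid G) (d : Λ → G) (src rng : Λ → Λ) (mul : Λ → Λ → Λ)
    (F : Finset Λ) : Set Λ :=
  {γ | ∃ S : Finset Λ, S.Nonempty ∧ S ⊆ F ∧ γ ∈ MCEset P d src rng mul ↑S}

/-- Given that `a` is an initial segment of `c`, the (unique) complementary segment;
junk value `c` otherwise. -/
def tail (src rng : Λ → Λ) (mul : Λ → Λ → Λ) (a c : Λ) : Λ :=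
  if h : IsInit src rng mul a c then h.choose else c

section CstarFamilies

variable (P : Submonoid G) (d : Λ → G) (src rng : Λ → Λ) (mul : Λ → Λ → Λ)
variable {B : Type*} [CStarAlgebra B] [PartialOrder B] [StarOrderedRing B]

/-- A Toeplitz `E`-family in a C*-algebra `B` (conditions (1)–(4)). -/
structure IsToeplitzFamily (t : Λ → B) : Prop where
  vertex_sa : ∀ v, d v = 1 → IsSelfAdjoint (t v)
  vertex_idem : ∀ v, d v = 1 → t v * t v = t v
  vertex_orth : ∀ v w, d v = 1 → d w = 1 → v ≠ w → t v * t w = 0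
  mul_eq : ∀ a b, rng a = src b → t a * t b = t (mul a b)
  star_mul_self : ∀ a, star (t a) * t a = t (rng a)
  dom : ∀ p : G, p ∈ P → p ≠ 1 → ∀ v, d v = 1 → ∀ F : Finset Λ,
    (∀ a ∈ F, d a = p ∧ src a = v) → (∑ a ∈ F, t a * star (t a)) ≤ t v

/-- The Nica-covariance/Cuntz–Krieger relation (5):
`tμ* tν = ∑_{γ = μα = νβ ∈ MCE(μ,ν)} tα tβ*`. -/
def TCKrel (t : Λ → B) : Prop :=
  ∀ μ ν : Λ, ∀ M : Finset Λ, ↑M = MCE P d src rng mul μ ν →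
    star (t μ) * t ν =
      ∑ γ ∈ M, t (tail src rng mul μ γ) * star (t (tail src rng mul ν γ))

/-- A Toeplitz–Cuntz–Krieger `E`-family: conditions (1)–(5). -/
def IsTCKFamily (t : Λ → B) : Prop :=
  IsToeplitzFamily P d src rng mul t ∧ TCKrel P d src rng mul t

/-- Condition (†): for every finite `R ⊆ P∖{1}`, every vertex `v`, and all finite sets
`F_p ⊆ s_p⁻¹(v)` (`p ∈ R`), the product `∏_{p ∈ R} (t_v − ∑_{a ∈ F_p} t_a t_a*)` is nonzero.
(The factors commute, so the product is stated for an arbitrary enumeration of `R`.) -/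
def Dagger (t : Λ → B) : Prop :=
  ∀ R : List G, R.Nodup → (∀ p ∈ R, p ∈ P ∧ p ≠ 1) →
    ∀ v, d v = 1 → ∀ Fp : G → Finset Λ,
      (∀ p ∈ R, ∀ a ∈ Fp p, d a = p ∧ src a = v) →
        (R.map fun p => t v - ∑ a ∈ Fp p, t a * star (t a)).prod ≠ 0

/-- The projection `Q^{∨F}_l = t_l t_l* ∏_{l α ∈ ∨F, d α ≠ 1} (t_{s(l)} − t_{lα} t_{lα}*)`.
(The factors commute, so the product is computed over an arbitrary enumeration.) -/
def Qproj (t : Λ → B) (F : Finset Λ) (l : Λ) : B :=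
  if h : {α : Λ | d α ≠ 1 ∧ rng l = src α ∧ mul l α ∈ vee P d src rng mul F}.Finite then
    t l * star (t l) *
      (h.toFinset.toList.map fun α =>
        t (src l) - t (mul l α) * star (t (mul l α))).prod
  else 0

end CstarFamilies

/-- The positive cone `ℕ^k` inside `ℤ^k` (written multiplicatively). -/
def posCone (k : ℕ) : Submonoid (Multiplicative (Fin k → ℤ)) where
  carrier := {g | ∀ i, 0 ≤ Multiplicative.toAdd g i}
  mul_mem' := by
    intro a b ha hb i
    simpa using add_nonneg (ha i) (hb i)
  one_mem' := by
    intro i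
    simp

/-- The `i`-th standard generator of `ℕ^k ⊆ ℤ^k`. -/
def egen (k : ℕ) (i : Fin k) : Multiplicative (Fin k → ℤ) :=
  Multiplicative.ofAdd (Pi.single i 1)

end PSG
namespace PSG

/-!
Order the edges by "is an initial segment of". By unique factorisation the initial segments of a
fixed edge `γ` are determined by their degrees, and comparing them amounts to comparing degrees.

Finiteness: if `γ ∈ MCE({a} ∪ S)`, then `γ` has an initial segment `b` whose degree is the least
upper bound of `d(S)`; this `b` lies in `MCE(S)`, and `γ ∈ MCE(a, b)`. Induction on `S` then reduces
the finiteness of `MCE(S)` to finite alignment, starting from `MCE({a}) = MCE(a, a)`.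

Closure: an element `γ` of `MCE(S)` with `S ⊆ ∨F` is a minimal common extension of all those
elements of `F` that are initial segments of `γ`.
-/

section Order

variable {G : Type*} [Group G] {P : Submonoid G} {D : Set G} {p q r : G}

/-- The right LCM condition on `P`: two elements with a common upper bound in `P`, that is, with a
common right multiple, have a least one. This is a quasi-lattice order without the requirement
`P ∩ P⁻¹ = {1}`, so least upper bounds are unique only up to invertible elements of `P`. -/
def IsRightLCM (P : Submonoid G) : Prop :=
  ∀ p ∈ P, ∀ q ∈ P, (∃ r, IsUB P p q r) → ∃ r, IsLUB2 P p q r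

theorem qle_refl (p : G) : qle P p p := by
  simp [qle]

theorem qle.trans (hpq : qle P p q) (hqr : qle P q r) : qle P p r := by
  simpa [qle, mul_assoc] using P.mul_mem hpq hqr

theorem isLUBFam_empty : IsLUBFam P ∅ 1 :=
  ⟨P.one_mem, by simp, fun r hr _ => by simpa [qle] using hr⟩

theorem isLUBFam_singleton (hp : p ∈ P) : IsLUBFam P {p} p :=
  ⟨hp, by simp [qle_refl], by simp⟩

theorem IsLUBFam.qle_iff (hq : IsLUBFam P D q) (hr : r ∈ P) :
    qle P q r ↔ ∀ x ∈ D, qle P x r :=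
  ⟨fun hqr x hx => (hq.2.1 x hx).trans hqr, hq.2.2 r hr⟩

theorem IsLUBFam.insert_iff (hq : IsLUBFam P D q) :
    IsLUBFam P (insert p D) r ↔ IsLUB2 P p q r := by
  have isUB_iff (r' : G) : IsUB P p q r' ↔ r' ∈ P ∧ ∀ x ∈ insert p D, qle P x r' := by
    rw [Set.forall_mem_insert]
    exact and_congr_right fun hr' => and_congr_right fun _ => hq.qle_iff hr'
  simp only [IsLUBFam, IsLUB2, isUB_iff, and_assoc, and_imp]

theorem IsRightLCM.exists_isLUBFam (hP : IsRightLCM P) (hD : D.Finite) (hDP : D ⊆ P)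
    (hr : r ∈ P) (hDr : ∀ x ∈ D, qle P x r) : ∃ q, IsLUBFam P D q := by
  induction D, hD using Set.Finite.induction_on with
  | empty => exact ⟨1, isLUBFam_empty⟩
  | @insert p D _ _ ih =>
    rw [Set.insert_subset_iff] at hDP
    rw [Set.forall_mem_insert] at hDr
    obtain ⟨q, hq⟩ := ih hDP.2 hDr.2
    obtain ⟨s, hs⟩ := hP p hDP.1 q hq.1 ⟨r, hr, hDr.1, (hq.qle_iff hr).2 hDr.2⟩
    exact ⟨s, hq.insert_iff.2 hs⟩

end Order

namespace IsProductSystem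

variable {G : Type*} [Group G] {Λ : Type*} {P : Submonoid G} {d : Λ → G} {src rng : Λ → Λ}
  {mul : Λ → Λ → Λ} {a b c : Λ}

theorem isInit_refl (hPS : IsProductSystem P d src rng mul) (a : Λ) : IsInit src rng mul a a :=
  ⟨rng a, (hPS.src_vertex _ (hPS.d_rng a)).symm, hPS.mul_rng_self a⟩

theorem isInit_trans (hPS : IsProductSystem P d src rng mul) (hab : IsInit src rng mul a b)
    (hbc : IsInit src rng mul b c) : IsInit src rng mul a c := by
  obtain ⟨x, hax, rfl⟩ := hab
  obtain ⟨y, hy, rfl⟩ := hbc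
  have hxy : rng x = src y := by rw [← hPS.rng_mul a x hax, hy]
  exact ⟨mul x y, by rw [hPS.src_mul x y hxy, hax], (hPS.mul_assoc' a x y hax hxy).symm⟩

theorem src_eq_of_isInit (hPS : IsProductSystem P d src rng mul)
    (hab : IsInit src rng mul a b) : src a = src b := by
  obtain ⟨x, hx, rfl⟩ := hab
  exact (hPS.src_mul a x hx).symm

theorem qle_of_isInit (hPS : IsProductSystem P d src rng mul)
    (hab : IsInit src rng mul a b) : qle P (d a) (d b) := by
  obtain ⟨x, hx, rfl⟩ := hab
  simpa [qle, hPS.d_mul a x hx] using hPS.d_mem x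

theorem exists_isInit_of_qle (hPS : IsProductSystem P d src rng mul) {p : G} (hp : p ∈ P)
    (hpc : qle P p (d c)) : ∃ b, d b = p ∧ IsInit src rng mul b c := by
  obtain ⟨⟨b, x⟩, ⟨hb, -, hbx, hc⟩, -⟩ :=
    hPS.factor p (p⁻¹ * d c) hp hpc c (mul_inv_cancel_left _ _).symm
  exact ⟨b, hb, x, hbx, hc⟩

theorem eq_of_isInit_of_d_eq (hPS : IsProductSystem P d src rng mul)
    (hac : IsInit src rng mul a c) (hbc : IsInit src rng mul b c) (hd : d a = d b) : a = b := by
  obtain ⟨x, hax, rfl⟩ := hac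
  obtain ⟨y, hby, hc⟩ := hbc
  have hdc : d (mul a x) = d a * d x := hPS.d_mul a x hax
  have hxy : d y = d x := by
    rwa [← hc, hPS.d_mul b y hby, hd, mul_right_inj] at hdc
  have huniq := (hPS.factor (d a) (d x) (hPS.d_mem a) (hPS.d_mem x) (mul a x) hdc).unique
    (y₁ := (a, x)) (y₂ := (b, y)) ⟨rfl, rfl, hax, rfl⟩ ⟨hd.symm, hxy, hby, hc⟩
  exact congrArg Prod.fst huniq

theorem isInit_of_qle (hPS : IsProductSystem P d src rng mul) (hac : IsInit src rng mul a c)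
    (hbc : IsInit src rng mul b c) (hd : qle P (d a) (d b)) : IsInit src rng mul a b := by
  obtain ⟨a', hda', ha'b⟩ := hPS.exists_isInit_of_qle (hPS.d_mem a) hd
  rwa [← hPS.eq_of_isInit_of_d_eq (hPS.isInit_trans ha'b hbc) hac hda']

theorem mem_MCEset_singleton (hPS : IsProductSystem P d src rng mul) (a : Λ) :
    a ∈ MCEset P d src rng mul {a} := by
  refine ⟨by simpa using hPS.isInit_refl a, ?_⟩
  rw [Set.image_singleton]
  exact isLUBFam_singleton (hPS.d_mem a)

theorem MCEset_pair (hPS : IsProductSystem P d src rng mul) (a b : Λ) :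
    MCEset P d src rng mul {a, b} = MCE P d src rng mul a b := by
  ext c
  simp [MCEset, MCE, Set.image_pair, (isLUBFam_singleton (hPS.d_mem b)).insert_iff, and_assoc]

theorem MCEset_insert (hPS : IsProductSystem P d src rng mul) (hP : IsRightLCM P) (a : Λ)
    {S : Set Λ} (hS : S.Finite) :
    MCEset P d src rng mul (insert a S) =
      ⋃ b ∈ MCEset P d src rng mul S, MCE P d src rng mul a b := by
  refine Set.Subset.antisymm ?_ (Set.iUnion₂_subset ?_)
  · rintro c ⟨hinit, hlub⟩
    rw [Set.forall_mem_insert] at hinit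
    rw [Set.image_insert_eq] at hlub
    have hSc : ∀ p ∈ d '' S, qle P p (d c) := fun p hp => hlub.2.1 p (Or.inr hp)
    obtain ⟨q, hq⟩ := hP.exists_isLUBFam (hS.image d)
      (Set.image_subset_iff.2 fun x _ => hPS.d_mem x) hlub.1 hSc
    obtain ⟨b, rfl, hbc⟩ := hPS.exists_isInit_of_qle hq.1 ((hq.qle_iff hlub.1).2 hSc)
    have hSb : ∀ x ∈ S, IsInit src rng mul x b := fun x hx =>
      hPS.isInit_of_qle (hinit.2 x hx) hbc (hq.2.1 _ (Set.mem_image_of_mem d hx))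
    exact Set.mem_biUnion ⟨hSb, hq⟩ ⟨hinit.1, hbc, hq.insert_iff.1 hlub⟩
  · rintro b ⟨hSb, hb⟩ c ⟨hac, hbc, hc⟩
    refine ⟨Set.forall_mem_insert.2 ⟨hac, fun x hx => hPS.isInit_trans (hSb x hx) hbc⟩, ?_⟩
    rw [Set.image_insert_eq]
    exact hb.insert_iff.2 hc

theorem finite_MCEset (hPS : IsProductSystem P d src rng mul) (hP : IsRightLCM P)
    (hFA : FinitelyAligned P d src rng mul) {S : Finset Λ} (hS : S.Nonempty) :
    (MCEset P d src rng mul (S : Set Λ)).Finite := by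
  induction hS using Finset.Nonempty.cons_induction with
  | singleton a =>
    rw [Finset.coe_singleton, ← Set.pair_eq_singleton, hPS.MCEset_pair]
    exact hFA a a
  | cons a S _ _ ih =>
    rw [Finset.coe_cons, hPS.MCEset_insert hP a S.finite_toSet]
    exact ih.biUnion fun b _ => hFA a b

theorem mem_MCEset_of_forall_exists_subset (hPS : IsProductSystem P d src rng mul)
    {S T : Set Λ} (hc : c ∈ MCEset P d src rng mul S) (hTc : ∀ x ∈ T, IsInit src rng mul x c)
    (hST : ∀ a ∈ S, ∃ U ⊆ T, a ∈ MCEset P d src rng mul U) :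
    c ∈ MCEset P d src rng mul T := by
  obtain ⟨-, hdc, -, hleast⟩ := hc
  refine ⟨hTc, hdc, Set.forall_mem_image.2 fun x hx => hPS.qle_of_isInit (hTc x hx),
    fun r hr hTr => hleast r hr <| Set.forall_mem_image.2 fun a ha => ?_⟩
  obtain ⟨U, hUT, -, haU⟩ := hST a ha
  exact (haU.qle_iff hr).2 fun p hp => hTr p (Set.image_mono hUT hp)

theorem subset_vee (hPS : IsProductSystem P d src rng mul) (F : Finset Λ) :
    ↑F ⊆ vee P d src rng mul F := fun a ha =>
  ⟨{a}, Finset.singleton_nonempty a, Finset.singleton_subset_iff.2 ha,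
    by simpa using hPS.mem_MCEset_singleton a⟩

theorem finite_vee (hPS : IsProductSystem P d src rng mul) (hP : IsRightLCM P)
    (hFA : FinitelyAligned P d src rng mul) (F : Finset Λ) :
    (vee P d src rng mul F).Finite := by
  have hfin : {S : Finset Λ | S.Nonempty ∧ S ⊆ F}.Finite :=
    F.powerset.finite_toSet.subset fun S hS => Finset.mem_powerset.2 hS.2
  refine (hfin.biUnion fun S hS => hPS.finite_MCEset hP hFA hS.1).subset ?_
  rintro c ⟨S, hS, hSF, hc⟩
  exact Set.mem_biUnion (show S ∈ {S : Finset Λ | S.Nonempty ∧ S ⊆ F} from ⟨hS, hSF⟩) hc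

theorem src_mem_image_of_mem_vee (hPS : IsProductSystem P d src rng mul) {F : Finset Λ}
    (hc : c ∈ vee P d src rng mul F) : src c ∈ src '' (F : Set Λ) := by
  obtain ⟨S, ⟨a, ha⟩, hSF, hc⟩ := hc
  exact ⟨a, hSF ha, hPS.src_eq_of_isInit (hc.1 a ha)⟩

theorem mem_vee_filter_src_iff (hPS : IsProductSystem P d src rng mul) {F : Finset Λ} {v : Λ} :
    c ∈ vee P d src rng mul (F.filter fun a => src a = v) ↔
      c ∈ vee P d src rng mul F ∧ src c = v := by
  constructor
  · intro hc
    obtain ⟨a, ha, hac⟩ := hPS.src_mem_image_of_mem_vee hc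
    obtain ⟨S, hS, hSF, hc⟩ := hc
    exact ⟨⟨S, hS, hSF.trans (Finset.filter_subset _ F), hc⟩,
      hac.symm.trans (Finset.mem_filter.1 ha).2⟩
  · rintro ⟨⟨S, hS, hSF, hc⟩, rfl⟩
    exact ⟨S, hS, fun x hx => Finset.mem_filter.2
      ⟨hSF hx, hPS.src_eq_of_isInit (hc.1 x hx)⟩, hc⟩

theorem vee_eq_biUnion_filter_src (hPS : IsProductSystem P d src rng mul) (F : Finset Λ) :
    vee P d src rng mul F =
      ⋃ v ∈ src '' (F : Set Λ), vee P d src rng mul (F.filter fun a => src a = v) := by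
  ext c
  simp only [Set.mem_iUnion₂, hPS.mem_vee_filter_src_iff]
  exact ⟨fun hc => ⟨src c, hPS.src_mem_image_of_mem_vee hc, hc, rfl⟩, fun ⟨_, _, hc, _⟩ => hc⟩

theorem pairwise_disjoint_vee_filter_src (hPS : IsProductSystem P d src rng mul)
    (F : Finset Λ) :
    Pairwise (Function.onFun Disjoint fun v =>
      vee P d src rng mul (F.filter fun a => src a = v)) := fun _ _ hvw =>
  Set.disjoint_left.2 fun _ hv hw => hvw <|
    (hPS.mem_vee_filter_src_iff.1 hv).2.symm.trans (hPS.mem_vee_filter_src_iff.1 hw).2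

theorem MCEset_subset_vee (hPS : IsProductSystem P d src rng mul) {F : Finset Λ} {S : Set Λ}
    (hS : S.Nonempty) (hSF : S ⊆ vee P d src rng mul F) :
    MCEset P d src rng mul S ⊆ vee P d src rng mul F := by
  intro c hc
  let T : Finset Λ := F.filter fun x => IsInit src rng mul x c
  have hST : ∀ a ∈ S, ∃ U : Finset Λ, U.Nonempty ∧ U ⊆ T ∧ a ∈ MCEset P d src rng mul U := by
    intro a ha
    obtain ⟨U, hU, hUF, haU⟩ := hSF ha
    exact ⟨U, hU, fun x hx => Finset.mem_filter.2
      ⟨hUF hx, hPS.isInit_trans (haU.1 x hx) (hc.1 a ha)⟩, haU⟩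
  have hT : T.Nonempty := by
    obtain ⟨a, ha⟩ := hS
    obtain ⟨U, hU, hUT, -⟩ := hST a ha
    exact hU.mono hUT
  refine ⟨T, hT, Finset.filter_subset _ F,
    hPS.mem_MCEset_of_forall_exists_subset hc (fun x hx => (Finset.mem_filter.1 hx).2) ?_⟩
  intro a ha
  obtain ⟨U, -, hUT, haU⟩ := hST a ha
  exact ⟨U, Finset.coe_subset.2 hUT, haU⟩

end IsProductSystem

theorem stmt0_general {G : Type*} [Group G] {Λ : Type*} (P : Submonoid G)
    (hP : IsRightLCM P)
    (d : Λ → G) (src rng : Λ → Λ) (mul : Λ → Λ → Λ)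
    (hPS : IsProductSystem P d src rng mul)
    (hFA : FinitelyAligned P d src rng mul)
    (F : Finset Λ) :
    (↑F ⊆ vee P d src rng mul F) ∧
    (vee P d src rng mul F =
      ⋃ v ∈ src '' (↑F : Set Λ),
        vee P d src rng mul (F.filter fun a => src a = v)) ∧
    ((src '' (↑F : Set Λ)).PairwiseDisjoint fun v =>
        vee P d src rng mul (F.filter fun a => src a = v)) ∧
    (vee P d src rng mul F).Finite ∧
    (∀ S : Finset Λ, S.Nonempty → ↑S ⊆ vee P d src rng mul F →
      MCEset P d src rng mul ↑S ⊆ vee P d src rng mul F) :=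
  ⟨hPS.subset_vee F, hPS.vee_eq_biUnion_filter_src F,
    (hPS.pairwise_disjoint_vee_filter_src F).set_pairwise _, hPS.finite_vee hP hFA F,
    fun _ hS hSF => hPS.MCEset_subset_vee hS hSF⟩

/-- Lemma 7.2 (Lemma `vee F`): basic properties of `∨F`. -/
theorem stmt0 {G : Type*} [Group G] {Λ : Type*} (P : Submonoid G)
    (hQLO : QuasiLatticeOrdered P)
    (d : Λ → G) (src rng : Λ → Λ) (mul : Λ → Λ → Λ)
    (hPS : IsProductSystem P d src rng mul)
    (hFA : FinitelyAligned P d src rng mul)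
    (F : Finset Λ) :
    (↑F ⊆ vee P d src rng mul F) ∧
    (vee P d src rng mul F =
      ⋃ v ∈ src '' (↑F : Set Λ),
        vee P d src rng mul (F.filter fun a => src a = v)) ∧
    ((src '' (↑F : Set Λ)).PairwiseDisjoint fun v =>
        vee P d src rng mul (F.filter fun a => src a = v)) ∧
    (vee P d src rng mul F).Finite ∧
    (∀ S : Finset Λ, S.Nonempty → ↑S ⊆ vee P d src rng mul F →
      MCEset P d src rng mul ↑S ⊆ vee P d src rng mul F) :=
  stmt0_general P hQLO.2 d src rng mul hPS hFA F

end PSG
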